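/- arXiv:astro-ph/0401293 — 3 statements merged into one kernel-verified Lean document; each statement's English description precedes it below -/
import Mathlib

section
/- Let E be a finite-dimensional real inner product space, let k ≥ 2 be a natural number, and let V : E → ℝ be twice continuously differentiable with gradient ∇V satisfying the homogeneity relation ∇V(s • x) = s^(k-1) • ∇V(x) for all s > 0 and x ∈ E. If C ∈ E satisfies ∇V(C) = C, then the Hessian of V at C, viewed as the (Fréchet) derivative of ∇V at C, maps C to (k−1) • C; i.e., C is an eigenvector of the Hessian V''(C) with eigenvalue k−1. -/
/-- **Yoshida's eigenvalue lemma.** If `V : E → ℝ` is `C²` on a finite-dimensional real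
inner product space, its gradient is homogeneous of degree `k - 1` under positive scalings,
and `C` satisfies `∇V(C) = C`, then the Hessian of `V` at `C` (the Fréchet derivative of
the gradient map at `C`) maps `C` to `(k - 1) • C`. -/
theorem hessian_eigenvalue_at_straight_line_point
    {E : Type*} [NormedAddCommGroup E] [InnerProductSpace ℝ E] [FiniteDimensional ℝ E]
    (k : ℕ) (hk : 2 ≤ k) (V : E → ℝ) (hV : ContDiff ℝ 2 V)
    (hhom : ∀ s : ℝ, 0 < s → ∀ x : E, gradient V (s • x) = s ^ (k - 1) • gradient V x)
    (C : E) (hC : gradient V C = C) :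
    fderiv ℝ (gradient V) C C = ((k : ℝ) - 1) • C := by
  have hd : DifferentiableAt ℝ (gradient V) C := by
    have h1 : DifferentiableAt ℝ (fderiv ℝ V) C :=
      ((hV.fderiv_right (m := 1) (by norm_num)).differentiable (by norm_num)) C
    exact ((InnerProductSpace.toDual ℝ E).symm.toContinuousLinearEquiv.differentiableAt).comp C h1
  have hline : HasDerivAt (fun s : ℝ => s • C) C 1 := by
    simpa using (hasDerivAt_id (1 : ℝ)).smul_const C
  have hA : HasDerivAt (fun s : ℝ => gradient V (s • C)) (fderiv ℝ (gradient V) C C) 1 := by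
    have h2 : HasFDerivAt (gradient V) (fderiv ℝ (gradient V) C) ((1 : ℝ) • C) := by
      rw [one_smul]
      exact hd.hasFDerivAt
    exact h2.comp_hasDerivAt (1 : ℝ) hline
  have hB : HasDerivAt (fun s : ℝ => s ^ (k - 1) • C) (((k : ℝ) - 1) • C) 1 := by
    have h3 := (hasDerivAt_pow (k - 1) (1 : ℝ)).smul_const C
    have h4 : ((k - 1 : ℕ) : ℝ) = (k : ℝ) - 1 := by
      rw [Nat.cast_sub (by omega), Nat.cast_one]
    rw [one_pow, mul_one, h4] at h3
    exact h3
  refine hA.unique (hB.congr_of_eventuallyEq ?_)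
  filter_upwards [lt_mem_nhds (zero_lt_one : (0 : ℝ) < 1)] with s hs
  rw [hhom s hs C, hC]
end

section
/- Let Λ̄ > 0, λ̄ > 0, μ ∈ ℝ with Λ̄λ̄ − μ² ≠ 0, (λ̄ + μ)/(Λ̄λ̄ − μ²) > 0, (Λ̄ + μ)/(Λ̄λ̄ − μ²) > 0, and define V : ℝ² → ℝ by V(q₁,q₂) = (1/2)[(Λ̄/2)q₁⁴ + (λ̄/2)q₂⁴ − μ q₁² q₂²]. Let z₃ = (c₁, c₂) with c₁ = √((λ̄ + μ)/(Λ̄λ̄ − μ²)), c₂ = √((Λ̄ + μ)/(Λ̄λ̄ − μ²)). Then the trace of the Hessian of V at z₃ equals 6 + 2μ(Λ̄ + λ̄ + 2μ)/(Λ̄λ̄ − μ²); equivalently, the integrability index λ₃ = tr V''(z₃) − 3 equals 3 + 2μ(Λ̄ + λ̄ + 2μ)/(Λ̄λ̄ − μ²). -/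
/-- The phantom-cosmology potential `V(q₁,q₂) = ½[(Λ̄/2)q₁⁴ + (λ̄/2)q₂⁴ − μ q₁²q₂²]`. -/
noncomputable def phantomV (L l m : ℝ) (q : ℝ × ℝ) : ℝ :=
  (1 / 2) * ((L / 2) * q.1 ^ 4 + (l / 2) * q.2 ^ 4 - m * q.1 ^ 2 * q.2 ^ 2)

/-- The gradient `∇V = (∂V/∂q₁, ∂V/∂q₂)` of the phantom-cosmology potential. -/
noncomputable def phantomGrad (L l m : ℝ) (q : ℝ × ℝ) : ℝ × ℝ :=
  (deriv (fun x => phantomV L l m (x, q.2)) q.1,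
   deriv (fun y => phantomV L l m (q.1, y)) q.2)

/-- The Hessian matrix of second partial derivatives of the phantom-cosmology potential. -/
noncomputable def phantomHess (L l m : ℝ) (q : ℝ × ℝ) : Matrix (Fin 2) (Fin 2) ℝ :=
  !![deriv (fun x => (phantomGrad L l m (x, q.2)).1) q.1,
     deriv (fun y => (phantomGrad L l m (q.1, y)).1) q.2;
     deriv (fun x => (phantomGrad L l m (x, q.2)).2) q.1,
     deriv (fun y => (phantomGrad L l m (q.1, y)).2) q.2]

theorem phantom_dx (L l m x y : ℝ) :
    deriv (fun x => phantomV L l m (x, y)) x = L * x ^ 3 - m * x * y ^ 2 := by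
  have h : HasDerivAt (fun x : ℝ => phantomV L l m (x, y))
      ((1 / 2) * ((L / 2) * (4 * x ^ 3) + 0 - m * (2 * x) * y ^ 2)) x := by
    have h4 : HasDerivAt (fun x : ℝ => x ^ 4) (4 * x ^ 3) x := by
      simpa using hasDerivAt_pow 4 x
    have h2 : HasDerivAt (fun x : ℝ => x ^ 2) (2 * x) x := by
      simpa using hasDerivAt_pow 2 x
    exact (((h4.const_mul (L / 2)).add (hasDerivAt_const x ((l / 2) * y ^ 4))).sub
      ((h2.const_mul m).mul_const (y ^ 2))).const_mul (1 / 2)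
  rw [h.deriv]; ring

theorem phantom_symm (L l m x y : ℝ) : phantomV L l m (x, y) = phantomV l L m (y, x) := by
  simp only [phantomV]; ring

theorem phantom_dy (L l m x y : ℝ) :
    deriv (fun y => phantomV L l m (x, y)) y = l * y ^ 3 - m * y * x ^ 2 := by
  simp only [phantom_symm L l m x]
  exact phantom_dx l L m y x

theorem phantom_d2 (L m x y : ℝ) :
    deriv (fun x : ℝ => L * x ^ 3 - m * x * y ^ 2) x = 3 * L * x ^ 2 - m * y ^ 2 := by
  have h3 : HasDerivAt (fun x : ℝ => x ^ 3) (3 * x ^ 2) x := by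
    simpa using hasDerivAt_pow 3 x
  have h := (h3.const_mul L).sub (((hasDerivAt_id x).const_mul m).mul_const (y ^ 2))
  have h' : HasDerivAt (fun x : ℝ => L * x ^ 3 - m * x * y ^ 2)
    (L * (3 * x ^ 2) - m * 1 * y ^ 2) x := h
  rw [h'.deriv]; ring

theorem phantom_trace (L l m x y : ℝ) : (phantomHess L l m (x, y)).trace =
    (3 * L * x ^ 2 - m * y ^ 2) + (3 * l * y ^ 2 - m * x ^ 2) := by
  rw [Matrix.trace_fin_two]
  simp only [phantomHess, phantomGrad, phantom_dx, phantom_dy, phantom_d2, Matrix.of_apply,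
    Matrix.cons_val', Matrix.cons_val_zero, Matrix.cons_val_one, Matrix.cons_val_fin_one]

/-- **Trace of the Hessian at `z₃` and the integrability index `λ₃`.** At
`z₃ = (c₁, c₂)` with `c₁ = √((λ̄+μ)/(Λ̄λ̄−μ²))`, `c₂ = √((Λ̄+μ)/(Λ̄λ̄−μ²))`, the trace of the
Hessian equals `6 + 2μ(Λ̄+λ̄+2μ)/(Λ̄λ̄−μ²)`; equivalently, the integrability index
`λ₃ = tr V''(z₃) − 3` equals `3 + 2μ(Λ̄+λ̄+2μ)/(Λ̄λ̄−μ²)`. -/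
theorem phantom_hessian_z3_trace (L l m : ℝ) (hL : 0 < L) (hl : 0 < l)
    (hD : L * l - m ^ 2 ≠ 0)
    (h1 : 0 < (l + m) / (L * l - m ^ 2))
    (h2 : 0 < (L + m) / (L * l - m ^ 2)) :
    (phantomHess L l m (Real.sqrt ((l + m) / (L * l - m ^ 2)),
        Real.sqrt ((L + m) / (L * l - m ^ 2)))).trace =
      6 + 2 * m * (L + l + 2 * m) / (L * l - m ^ 2) ∧
    (phantomHess L l m (Real.sqrt ((l + m) / (L * l - m ^ 2)),
        Real.sqrt ((L + m) / (L * l - m ^ 2)))).trace - 3 =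
      3 + 2 * m * (L + l + 2 * m) / (L * l - m ^ 2) := by
  have key : (phantomHess L l m (Real.sqrt ((l + m) / (L * l - m ^ 2)),
        Real.sqrt ((L + m) / (L * l - m ^ 2)))).trace =
      6 + 2 * m * (L + l + 2 * m) / (L * l - m ^ 2) := by
    rw [phantom_trace, Real.sq_sqrt h1.le, Real.sq_sqrt h2.le]
    field_simp
    ring
  refine ⟨key, ?_⟩
  rw [key]; ring
end

section
/- Let w, A, B be real constants, let I ⊆ ℝ be an open interval, and let x : I → ℝ be differentiable with x(t) > 0 for all t ∈ I. If (x'(t)/x(t))² = A · x(t)^(−3(1+w)) + B for all t ∈ I, then the function y(t) = 1/x(t) satisfies (y'(t)/y(t))² = A · y(t)^(−3(1+w')) + B for all t ∈ I, where w' = −(2 + w) (i.e., 1 + w' = −(1 + w)). In particular, if x(t) is a solution of the flat Friedmann equation for barotropic index w, then x(t)^(−1) is a solution of the flat Friedmann equation for barotropic index −(w+2). -/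
/-- **Duality of the flat Friedmann equation.** If `x : I → ℝ` is positive and
differentiable on an open interval `I` and satisfies the flat Friedmann first integral
`(x'/x)² = A·x^(−3(1+w)) + B`, then `y = 1/x` satisfies the flat Friedmann first integral
`(y'/y)² = A·y^(−3(1+w')) + B` with the dual barotropic index `w' = −(2+w)`. -/
theorem friedmann_duality (w A B : ℝ) (I : Set ℝ) (hI : IsOpen I) (hI' : I.OrdConnected)
    (x : ℝ → ℝ) (hx : ∀ t ∈ I, DifferentiableAt ℝ x t) (hpos : ∀ t ∈ I, 0 < x t)
    (hfried : ∀ t ∈ I, (deriv x t / x t) ^ 2 = A * x t ^ (-3 * (1 + w)) + B) :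
    ∀ t ∈ I, (deriv (fun s => (x s)⁻¹) t / (x t)⁻¹) ^ 2 =
      A * ((x t)⁻¹) ^ (-3 * (1 + (-(2 + w)))) + B := by
  intro t ht
  have hp := hpos t ht
  have hne : x t ≠ 0 := hp.ne'
  have hd : deriv (fun s => (x s)⁻¹) t = -deriv x t / x t ^ 2 :=
    ((hx t ht).hasDerivAt.fun_inv hne).deriv
  have he : -3 * (1 + (-(2 + w))) = -(-3 * (1 + w)) := by ring
  rw [hd, he, Real.inv_rpow hp.le, Real.rpow_neg hp.le, inv_inv, ← hfried t ht]
  field_simp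
end
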